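/- Let a₀ > 0, let ψ be continuous and strictly positive on (0, a₀], let 0 < t_s < ∞, and let a : [0, t_s) → (0, a₀] be differentiable with a(0) = a₀ and a'(t) = −ψ(a(t)) for all t ∈ [0, t_s). If a(t) → 0 as t → t_s⁻, then the function x ↦ 1/ψ(x) is integrable on the interval (0, a₀) and t_s = ∫₀^{a₀} (1/ψ(x)) dx. -/

import Mathlib

/-!
The solution is a strictly decreasing bijection from the time interval onto the range of scales it
sweeps out. In the change of variables `x = a t` the Jacobian `|a' t| = ψ (a t)` cancels `1 / ψ`,
so the integral of `1 / ψ` over the scales is the integral of `1` over the time interval.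
-/

open Set Filter MeasureTheory Topology

section ImageOfIco

variable {α β : Type*} [TopologicalSpace α]
  [LinearOrder β] [TopologicalSpace β] [OrderClosedTopology β] {f : α → β} {s t : α} {b : β}

theorem lt_of_strictAntiOn_Ico_of_tendsto [LinearOrder α] [DenselyOrdered α] [OrderTopology α]
    (hf : StrictAntiOn f (Ico s t))
    (hlim : Tendsto f (𝓝[<] t) (𝓝 b)) {x : α} (hx : x ∈ Ico s t) : b < f x := by
  obtain ⟨y, hxy, hyt⟩ := exists_between hx.2
  have : (𝓝[<] t).NeBot := nhdsLT_neBot_of_exists_lt ⟨y, hyt⟩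
  have hy : y ∈ Ico s t := ⟨hx.1.trans hxy.le, hyt⟩
  have eventually_le : ∀ᶠ z in 𝓝[<] t, f z ≤ f y := by
    filter_upwards [Ico_mem_nhdsLT hyt] with z hz
    exact hf.antitoneOn hy ⟨hy.1.trans hz.1, hz.2⟩ hz.1
  exact (le_of_tendsto hlim eventually_le).trans_lt (hf hx hy hxy)

theorem image_Ico_eq_Ioc_of_strictAntiOn_of_tendsto [ConditionallyCompleteLinearOrder α]
    [DenselyOrdered α] [OrderTopology α] (hst : s < t)
    (hf : StrictAntiOn f (Ico s t)) (hcont : ContinuousOn f (Ico s t))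
    (hlim : Tendsto f (𝓝[<] t) (𝓝 b)) : f '' Ico s t = Ioc b (f s) := by
  have hs : s ∈ Ico s t := left_mem_Ico.2 hst
  have : (𝓝[<] t).NeBot := nhdsLT_neBot_of_exists_lt ⟨s, hst⟩
  refine Subset.antisymm ?_ <| isPreconnected_Ico.intermediate_value_Ioc hs
    (le_principal_iff.2 (Ico_mem_nhdsLT hst)) hcont hlim
  rintro _ ⟨x, hx, rfl⟩
  exact ⟨lt_of_strictAntiOn_Ico_of_tendsto hf hlim hx, hf.antitoneOn hs hx hx.1⟩

end ImageOfIco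

theorem strictAntiOn_of_forall_mem_hasDerivWithinAt_neg {f f' : ℝ → ℝ} {s : Set ℝ}
    (hs : Convex ℝ s) (hf : ∀ t ∈ s, HasDerivWithinAt f (f' t) s t) (hf' : ∀ t ∈ s, f' t < 0) :
    StrictAntiOn f s :=
  strictAntiOn_of_hasDerivWithinAt_neg hs (fun t ht => (hf t ht).continuousWithinAt)
    (fun t ht => (hf t (interior_subset ht)).mono interior_subset)
    fun t ht => hf' t (interior_subset ht)

theorem eqOn_abs_smul_inv_abs_one {ι : Type*} {g : ι → ℝ} {s : Set ι} (hg : ∀ i ∈ s, g i ≠ 0) :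
    EqOn (fun i => |g i| • |g i|⁻¹) (fun _ => 1) s :=
  fun i hi => mul_inv_cancel₀ (abs_ne_zero.2 (hg i hi))

section AutonomousODE

variable {v f : ℝ → ℝ} {s : Set ℝ}

theorem integrableOn_image_inv_abs_iff (hs : MeasurableSet s)
    (hode : ∀ t ∈ s, HasDerivWithinAt f (v (f t)) s t) (hf : InjOn f s)
    (hv : ∀ t ∈ s, v (f t) ≠ 0) :
    IntegrableOn (fun x => |v x|⁻¹) (f '' s) ↔ volume s < ⊤ := by
  rw [integrableOn_image_iff_integrableOn_abs_deriv_smul hs hode hf,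
    integrableOn_congr_fun (eqOn_abs_smul_inv_abs_one hv) hs, integrableOn_const_iff]
  simp

theorem setIntegral_image_inv_abs (hs : MeasurableSet s)
    (hode : ∀ t ∈ s, HasDerivWithinAt f (v (f t)) s t) (hf : InjOn f s)
    (hv : ∀ t ∈ s, v (f t) ≠ 0) :
    ∫ x in f '' s, |v x|⁻¹ = volume.real s := by
  rw [integral_image_eq_integral_abs_deriv_smul hs hode hf,
    setIntegral_congr_fun hs (eqOn_abs_smul_inv_abs_one hv)]
  simp

end AutonomousODE

theorem stmt1_general {t₀ t₁ b : ℝ} (ht : t₀ < t₁) {ψ a : ℝ → ℝ}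
    (hψpos : ∀ t ∈ Ico t₀ t₁, 0 < ψ (a t))
    (hode : ∀ t ∈ Ico t₀ t₁, HasDerivWithinAt a (-ψ (a t)) (Ico t₀ t₁) t)
    (hlim : Tendsto a (𝓝[<] t₁) (𝓝 b)) :
    IntegrableOn (fun x => 1 / ψ x) (Ioo b (a t₀)) ∧
      t₁ - t₀ = ∫ x in Ioo b (a t₀), 1 / ψ x := by
  have hanti : StrictAntiOn a (Ico t₀ t₁) :=
    strictAntiOn_of_forall_mem_hasDerivWithinAt_neg (convex_Ico t₀ t₁) hode
      fun t ht => neg_neg_of_pos (hψpos t ht)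
  have himage : a '' Ico t₀ t₁ = Ioc b (a t₀) :=
    image_Ico_eq_Ioc_of_strictAntiOn_of_tendsto ht hanti
      (fun t ht => (hode t ht).continuousWithinAt) hlim
  have hinv : EqOn (fun x => |-ψ x|⁻¹) (fun x => 1 / ψ x) (Ioc b (a t₀)) := by
    rw [← himage]
    rintro _ ⟨t, ht, rfl⟩
    simp only [abs_neg, abs_of_pos (hψpos t ht), one_div]
  have hne : ∀ t ∈ Ico t₀ t₁, -ψ (a t) ≠ 0 := fun t ht => neg_ne_zero.2 (hψpos t ht).ne'
  rw [← integrableOn_Ioc_iff_integrableOn_Ioo, ← integral_Ioc_eq_integral_Ioo,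
    ← integrableOn_congr_fun hinv measurableSet_Ioc, ← setIntegral_congr_fun measurableSet_Ioc hinv,
    ← himage, integrableOn_image_inv_abs_iff measurableSet_Ico hode hanti.injOn hne,
    setIntegral_image_inv_abs measurableSet_Ico hode hanti.injOn hne]
  exact ⟨measure_Ico_lt_top, (Real.volume_real_Ico_of_le ht.le).symm⟩

/-- Forward direction of Theorem 1 of the paper (singularity formation): if the
scale factor `a`, solving the collapse ODE `a' = -ψ(a)` with `a 0 = a₀`, tends to `0`
at the finite comoving time `t_s`, then `1/ψ` is integrable on `(0, a₀)` and the
collapse time is `t_s = ∫₀^{a₀} da / ψ(a)`. -/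
theorem stmt1 (a₀ t_s : ℝ) (ha₀ : 0 < a₀) (hts : 0 < t_s)
    (ψ a : ℝ → ℝ)
    (hψc : ContinuousOn ψ (Set.Ioc 0 a₀))
    (hψpos : ∀ x ∈ Set.Ioc 0 a₀, 0 < ψ x)
    (ha_mem : ∀ t ∈ Set.Ico 0 t_s, a t ∈ Set.Ioc 0 a₀)
    (ha0 : a 0 = a₀)
    (hode : ∀ t ∈ Set.Ico 0 t_s,
      HasDerivWithinAt a (-ψ (a t)) (Set.Ico 0 t_s) t)
    (hlim : Filter.Tendsto a (nhdsWithin t_s (Set.Iio t_s)) (nhds 0)) :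
    MeasureTheory.IntegrableOn (fun x => 1 / ψ x) (Set.Ioo 0 a₀) ∧
      t_s = ∫ x in Set.Ioo 0 a₀, 1 / ψ x := by
  simpa only [ha0, sub_zero] using
    stmt1_general hts (fun t ht => hψpos _ (ha_mem t ht)) hode hlim
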